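/- Let 2 < p < 6, 2 < q < 4 and μ > 0. If u and v are both nonnegative ground states of F_{p,q} at mass μ, then u = v. -/

import Mathlib

open MeasureTheory Real Set

noncomputable section

/-- `u ∈ H¹(ℝ)` with weak derivative `u'`: `u` is continuous, square-integrable,
`u'` is square-integrable, and `u(b) − u(a) = ∫_a^b u'(t) dt` for all `a ≤ b`. -/
def IsH1 (u u' : ℝ → ℝ) : Prop :=
  Continuous u ∧ Integrable (fun x => (u x) ^ 2) ∧ Integrable (fun x => (u' x) ^ 2) ∧
    ∀ a b : ℝ, a ≤ b → u b - u a = ∫ t in a..b, u' t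

/-- The mass `‖u‖₂² = ∫_ℝ u(x)² dx`. -/
def mass (u : ℝ → ℝ) : ℝ := ∫ x, (u x) ^ 2

/-- `D_q(u) = (1/2)∫ u'² − (1/q)|u(0)|^q`. -/
def Dfun (q : ℝ) (u u' : ℝ → ℝ) : ℝ :=
  (1 / 2) * (∫ x, (u' x) ^ 2) - (1 / q) * |u 0| ^ q

/-- `F_{p,q}(u) = (1/2)∫ u'² − (1/p)∫ |u|^p − (1/q)|u(0)|^q`. -/
def Ffun (p q : ℝ) (u u' : ℝ → ℝ) : ℝ :=
  (1 / 2) * (∫ x, (u' x) ^ 2) - (1 / p) * (∫ x, |u x| ^ p) - (1 / q) * |u 0| ^ q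

/-!
A nonnegative ground state solves `-u'' + ω u = u ^ (p - 1) + u(0) ^ (q - 1) δ₀` weakly; restoring
the mass of a perturbation by a dilation identifies the multiplier and shows `ω ≥ 0`. On each half
line the energy `u'² - ω u² + (2 / p) u ^ p` is constant, hence zero by integrability. At the origin
`u'` jumps by `-u(0) ^ (q - 1)` while the two energies agree, so the one-sided derivatives are
`∓ u(0) ^ (q - 1) / 2`. Writing `s = u(0)`, this eliminates `ω`: with `U(x)` either `u(x)` or
`u(-x)`, one has `U' = -U r(U)` for `x ≥ 0`, where
`r(y)² = (2 / p) (s ^ (p - 2) - y ^ (p - 2)) + s ^ (2 (q - 2)) / 4`. In particular `s` determines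
`u`. Substituting `y = U(x)` and then `y = s z` gives
`∫_0^∞ U² = ∫_0^s y / r(y) dy = ∫_0^1 z ((2 / p) s ^ (p - 6) (1 - z ^ (p - 2)) +
s ^ (2 (q - 4)) / 4) ^ (-1 / 2) dz`,
which is strictly increasing in `s` for `p ≤ 6` and `q < 4`, so the mass determines `s`.
-/

open Filter Topology

section Reals

variable {a x y : ℝ}

lemma rpow_add_mul_sub_le_abs_rpow (ha : 1 ≤ a) (hx : 0 ≤ x) :
    x ^ a + a * x ^ (a - 1) * (y - x) ≤ |y| ^ a := by
  rcases hx.eq_or_lt with rfl | hx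
  · rcases ha.eq_or_lt with rfl | ha
    · simpa using le_abs_self y
    · rw [zero_rpow (by linarith), zero_rpow (by linarith)]
      simp only [mul_zero, zero_mul, add_zero]
      positivity
  · have bernoulli : 1 + a * (|y| / x - 1) ≤ (|y| / x) ^ a := by
      simpa using one_add_mul_self_le_rpow_one_add (s := |y| / x - 1)
        (by linarith [div_nonneg (abs_nonneg y) hx.le]) ha
    rw [div_rpow (abs_nonneg y) hx.le, le_div_iff₀ (by positivity)] at bernoulli
    have hpow : x ^ a = x ^ (a - 1) * x := by rw [← rpow_add_one hx.ne', sub_add_cancel]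
    calc x ^ a + a * x ^ (a - 1) * (y - x)
        ≤ x ^ a + a * x ^ (a - 1) * (|y| - x) := by gcongr; exact le_abs_self y
      _ = (1 + a * (|y| / x - 1)) * x ^ a := by rw [hpow]; field_simp
      _ ≤ |y| ^ a := bernoulli

lemma rpow_eq_rpow_sub_two_mul_sq (ha : a ≠ 0) (hx : 0 ≤ x) : x ^ a = x ^ (a - 2) * x ^ 2 := by
  rw [← rpow_natCast, ← rpow_add' hx (by simpa using ha)]
  norm_num

end Reals

lemma eq_zero_of_integrableOn_of_forall_eq {f : ℝ → ℝ} {c : ℝ} {s : Set ℝ} (hs : MeasurableSet s)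
    (hvol : volume s = ⊤) (hf : IntegrableOn f s) (hc : ∀ x ∈ s, f x = c) : c = 0 := by
  simpa [integrableOn_const_iff, hvol] using hf.congr_fun hc hs

lemma exists_affine_of_second_difference_eq_zero {f : ℝ → ℝ} (hf : Continuous f)
    (h : ∀ b h, 0 < h → f (b - h) + f (b + h) = 2 * f b) : ∃ β, ∀ x, f x = f 0 + β * x := by
  have map_midpoint (x y : ℝ) : f (midpoint ℝ x y) = midpoint ℝ (f x) (f y) := by
    wlog hxy : x < y generalizing x y
    · rcases (not_lt.1 hxy).eq_or_lt with rfl | hlt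
      · simp
      · rw [midpoint_comm, this y x hlt, midpoint_comm]
    have hmid := h ((x + y) / 2) ((y - x) / 2) (by linarith)
    rw [show (x + y) / 2 - (y - x) / 2 = x by ring,
      show (x + y) / 2 + (y - x) / 2 = y by ring] at hmid
    simp only [midpoint_eq_smul_add, invOf_eq_inv, smul_eq_mul, ← div_eq_inv_mul]
    linarith
  let A := AffineMap.ofMapMidpoint f map_midpoint hf
  refine ⟨A.linear 1, fun x => ?_⟩
  have hvadd : f x = A.linear x + f 0 := by
    have := A.map_vadd 0 x
    simp only [vadd_eq_add, add_zero] at this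
    exact this
  have hlin : A.linear x = x * A.linear 1 := by simpa using A.linear.map_smul x 1
  rw [hvadd, hlin]
  ring

section Mass

variable {f g : ℝ → ℝ}

lemma mass_zero : mass 0 = 0 := by simp [mass]

lemma mass_nonneg (f : ℝ → ℝ) : 0 ≤ mass f := integral_nonneg fun x => sq_nonneg (f x)

lemma mass_add_mul (hf : MemLp f 2) (hg : MemLp g 2) (t : ℝ) :
    mass (fun x => f x + t * g x) = mass f + 2 * t * (∫ x, f x * g x) + t ^ 2 * mass g := by
  have hfg : Integrable (fun x => f x * g x) := hf.integrable_mul hg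
  have expand (x : ℝ) :
      (f x + t * g x) ^ 2 = f x ^ 2 + (2 * t * (f x * g x) + t ^ 2 * g x ^ 2) := by ring
  simp only [mass, expand]
  have hrest : Integrable (fun x => 2 * t * (f x * g x) + t ^ 2 * g x ^ 2) :=
    (hfg.const_mul _).add (hg.integrable_sq.const_mul _)
  rw [integral_add hf.integrable_sq hrest,
    integral_add (hfg.const_mul _) (hg.integrable_sq.const_mul _), integral_const_mul,
    integral_const_mul, add_assoc]

lemma integral_comp_mul_left_of_pos (f : ℝ → ℝ) {l : ℝ} (hl : 0 < l) :
    ∫ x, f (l * x) = (∫ x, f x) / l := by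
  rw [Measure.integral_comp_mul_left, abs_of_pos (inv_pos.2 hl), smul_eq_mul, inv_mul_eq_div]

lemma mass_comp_mul_left (f : ℝ → ℝ) {l : ℝ} (hl : 0 < l) :
    mass (fun x => f (l * x)) = mass f / l :=
  integral_comp_mul_left_of_pos (fun x => f x ^ 2) hl

lemma Ffun_comp_mul_left (p q : ℝ) (f g : ℝ → ℝ) {l : ℝ} (hl : 0 < l) :
    Ffun p q (fun x => f (l * x)) (fun x => l * g (l * x)) =
      l / 2 * mass g - 1 / p * ((∫ x, |f x| ^ p) / l) - 1 / q * |f 0| ^ q := by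
  have kinetic : ∫ x, (l * g (l * x)) ^ 2 = l * mass g := by
    simp only [mul_pow]
    rw [integral_const_mul, integral_comp_mul_left_of_pos (fun x => g x ^ 2) hl, mass]
    field_simp
  simp only [Ffun, kinetic, integral_comp_mul_left_of_pos (fun x => |f x| ^ p) hl, mul_zero]
  ring

lemma mass_eq_two_mul_of_integral_eq {m : ℝ} (hf : Integrable (fun x => f x ^ 2))
    (hright : ∫ x in Ioi 0, f x ^ 2 = m) (hleft : ∫ x in Ioi 0, f (-x) ^ 2 = m) :
    mass f = 2 * m := by
  rw [integral_comp_neg_Ioi 0 (fun x => f x ^ 2), neg_zero] at hleft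
  rw [mass, ← intervalIntegral.integral_Iic_add_Ioi hf.integrableOn hf.integrableOn, hleft, hright]
  ring

end Mass

namespace IsH1

variable {u u' f f' : ℝ → ℝ}

protected lemma continuous (h : IsH1 u u') : Continuous u := h.1

lemma integrable_sq (h : IsH1 u u') : Integrable (fun x => u x ^ 2) := h.2.1

lemma integrable_deriv_sq (h : IsH1 u u') : Integrable (fun x => u' x ^ 2) := h.2.2.1

lemma sub_eq_integral (h : IsH1 u u') (a b : ℝ) : u b - u a = ∫ t in a..b, u' t := by
  rcases le_total a b with hab | hab
  · exact h.2.2.2 a b hab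
  · rw [intervalIntegral.integral_symm, ← h.2.2.2 b a hab, neg_sub]

lemma memLp (h : IsH1 u u') : MemLp u 2 :=
  (memLp_two_iff_integrable_sq h.continuous.aestronglyMeasurable).2 h.integrable_sq

lemma mass_pos (h : IsH1 u u') (hu : u ≠ 0) : 0 < mass u := by
  obtain ⟨x, hx⟩ := Function.ne_iff.1 hu
  exact integral_pos_of_integrable_nonneg_nonzero (x := x) (h.continuous.pow 2) h.integrable_sq
    (fun y => sq_nonneg (u y)) (pow_ne_zero 2 hx)

lemma eq_zero_of_mass_eq_zero (h : IsH1 u u') (hm : mass u = 0) : u = 0 :=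
  by_contra fun hu => (h.mass_pos hu).ne' hm

-- The integral of a non-integrable function is `0` by convention, so `u` takes one and the same
-- value left of `a` and right of `b`; square-integrability forces this value to vanish.
lemma eq_zero_of_not_intervalIntegrable (h : IsH1 u u') {a b : ℝ} (hab : a ≤ b)
    (hn : ¬ IntervalIntegrable u' volume a b) : u a = 0 ∧ u b = 0 := by
  have hconst (c : ℝ) (hc : c ≤ a) : u c = u b := by
    have hn' : ¬ IntervalIntegrable u' volume c b := fun hi =>
      hn (hi.mono_set (uIcc_subset_uIcc_right ⟨by simp [hc], by simp [hab]⟩))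
    have hsub := h.sub_eq_integral c b
    rw [intervalIntegral.integral_undef hn'] at hsub
    linarith
  have hb : u b = 0 := pow_eq_zero_iff two_ne_zero |>.1 <|
    eq_zero_of_integrableOn_of_forall_eq measurableSet_Iic (by simp) h.integrable_sq.integrableOn
      fun c (hc : c ≤ a) => by rw [hconst c hc]
  exact ⟨(hconst a le_rfl).trans hb, hb⟩

lemma intervalIntegrable (h : IsH1 u u') (hu : u ≠ 0) (a b : ℝ) :
    IntervalIntegrable u' volume a b := by
  obtain ⟨x, hx⟩ := Function.ne_iff.1 hu
  have from_x (y : ℝ) : IntervalIntegrable u' volume x y := by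
    by_contra hn
    rcases le_total x y with hxy | hyx
    · exact hx (h.eq_zero_of_not_intervalIntegrable hxy hn).1
    · exact hx (h.eq_zero_of_not_intervalIntegrable hyx (mt IntervalIntegrable.symm hn)).2
  exact (from_x a).symm.trans (from_x b)

lemma locallyIntegrable (h : IsH1 u u') (hu : u ≠ 0) : LocallyIntegrable u' := fun x =>
  ⟨Ioc (x - 1) (x + 1), Ioc_mem_nhds (by linarith) (by linarith),
    (intervalIntegrable_iff_integrableOn_Ioc_of_le (by linarith)).1 (h.intervalIntegrable hu _ _)⟩

lemma memLp_deriv (h : IsH1 u u') (hu : u ≠ 0) : MemLp u' 2 :=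
  (memLp_two_iff_integrable_sq (h.locallyIntegrable hu).aestronglyMeasurable).2
    h.integrable_deriv_sq

lemma ae_hasDerivAt (h : IsH1 u u') (hu : u ≠ 0) : ∀ᵐ x, HasDerivAt u (u' x) x := by
  filter_upwards
    [_root_.LocallyIntegrable.ae_hasDerivAt_integral (h.locallyIntegrable hu)] with x hx
  have hprim : u = fun y => u 0 + ∫ t in (0 : ℝ)..y, u' t := by
    funext y
    rw [← h.sub_eq_integral 0 y]
    ring
  rw [hprim]
  exact (hx 0).const_add (u 0)

lemma comp_neg (h : IsH1 u u') : IsH1 (fun x => u (-x)) (fun x => -u' (-x)) := by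
  refine ⟨h.continuous.comp continuous_neg, h.integrable_sq.comp_neg, ?_, fun a b _ => ?_⟩
  · simpa only [neg_sq] using h.integrable_deriv_sq.comp_neg
  · rw [intervalIntegral.integral_neg, intervalIntegral.integral_comp_neg, ← h.sub_eq_integral,
      neg_sub]

lemma comp_mul_left (h : IsH1 u u') {l : ℝ} (hl : 0 < l) :
    IsH1 (fun x => u (l * x)) (fun x => l * u' (l * x)) := by
  refine ⟨h.continuous.comp (continuous_const_mul l), h.integrable_sq.comp_mul_left' hl.ne', ?_,
    fun a b _ => ?_⟩
  · simpa only [mul_pow] using (h.integrable_deriv_sq.comp_mul_left' hl.ne').const_mul (l ^ 2)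
  · rw [intervalIntegral.integral_const_mul, intervalIntegral.mul_integral_comp_mul_left,
      ← h.sub_eq_integral]

lemma add_mul (hu : IsH1 u u') (hu0 : u ≠ 0) (hf : IsH1 f f') (hf0 : f ≠ 0) (t : ℝ) :
    IsH1 (fun x => u x + t * f x) (fun x => u' x + t * f' x) := by
  refine ⟨hu.continuous.add (continuous_const.mul hf.continuous),
    (hu.memLp.add (hf.memLp.const_mul t)).integrable_sq,
    ((hu.memLp_deriv hu0).add ((hf.memLp_deriv hf0).const_mul t)).integrable_sq, fun a b _ => ?_⟩
  rw [intervalIntegral.integral_add (hu.intervalIntegrable hu0 a b)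
    ((hf.intervalIntegrable hf0 a b).const_mul t), intervalIntegral.integral_const_mul,
    ← hu.sub_eq_integral, ← hf.sub_eq_integral]
  ring

lemma abs_sub_le (h : IsH1 u u') (hu : u ≠ 0) {x y : ℝ} (hxy : x ≤ y) :
    |u y - u x| ≤ (y - x) + mass u' := by
  have hsq : IntervalIntegrable (fun t => u' t ^ 2) volume x y :=
    h.integrable_deriv_sq.intervalIntegrable
  calc |u y - u x| = |∫ t in x..y, u' t| := by rw [h.sub_eq_integral]
    _ ≤ ∫ t in x..y, |u' t| := intervalIntegral.abs_integral_le_integral_abs hxy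
    _ ≤ ∫ t in x..y, (1 + u' t ^ 2) :=
        intervalIntegral.integral_mono_on hxy (h.intervalIntegrable hu x y).abs
          (intervalIntegrable_const.add hsq) fun t _ => by
            nlinarith [sq_nonneg (|u' t| - 1), sq_abs (u' t), abs_nonneg (u' t)]
    _ = (y - x) + ∫ t in x..y, u' t ^ 2 := by
        rw [intervalIntegral.integral_add intervalIntegrable_const hsq,
          intervalIntegral.integral_const, smul_eq_mul, mul_one]
    _ ≤ (y - x) + mass u' := by
        rw [intervalIntegral.integral_of_le hxy]
        gcongr
        exact setIntegral_le_integral h.integrable_deriv_sq (.of_forall fun t => sq_nonneg _)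

lemma exists_abs_le (h : IsH1 u u') (hu : u ≠ 0) : ∃ M, ∀ x, |u x| ≤ M := by
  refine ⟨√(mass u) + (1 + mass u'), fun x => ?_⟩
  obtain ⟨y, ⟨hxy, hyx⟩, hy⟩ : ∃ y ∈ Ioc x (x + 1), u y ^ 2 ≤ ⨍ t in Ioc x (x + 1), u t ^ 2 :=
    exists_le_setAverage (by simp) (by simp) h.integrable_sq.integrableOn
  have hy' : |u y| ≤ √(mass u) := abs_le_sqrt <| hy.trans <| by
    simpa [setAverage_eq, mass] using
      setIntegral_le_integral (s := Ioc x (x + 1)) h.integrable_sq (.of_forall fun t => sq_nonneg _)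
  have hsub := h.abs_sub_le hu hxy.le
  rw [abs_sub_comm] at hsub
  linarith [abs_sub_abs_le_abs_sub (u x) (u y)]

lemma integrable_abs_rpow_mul (h : IsH1 u u') (hu : u ≠ 0) {a : ℝ} (ha : 0 ≤ a) {g : ℝ → ℝ}
    (hg : Integrable g) : Integrable (fun x => |u x| ^ a * g x) := by
  obtain ⟨M, hM⟩ := h.exists_abs_le hu
  refine hg.bdd_mul (c := M ^ a)
    (h.continuous.abs.rpow_const fun _ => Or.inr ha).aestronglyMeasurable (.of_forall fun x => ?_)
  rw [norm_of_nonneg (by positivity)]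
  exact rpow_le_rpow (abs_nonneg _) (hM x) ha

lemma integrable_abs_rpow (h : IsH1 u u') (hu : u ≠ 0) {p : ℝ} (hp : 2 ≤ p) :
    Integrable (fun x => |u x| ^ p) := by
  refine (h.integrable_abs_rpow_mul hu (sub_nonneg.2 hp) h.integrable_sq).congr
    (.of_forall fun x => ?_)
  simp only [rpow_eq_rpow_sub_two_mul_sq (a := p) (by linarith) (abs_nonneg (u x)), sq_abs]

lemma integrable_rpow_sub_one_mul (h : IsH1 u u') (hu : u ≠ 0) (hpos : ∀ x, 0 ≤ u x)
    (hf : IsH1 f f') {p : ℝ} (hp : 2 ≤ p) : Integrable (fun x => u x ^ (p - 1) * f x) := by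
  have huf : Integrable (fun x => u x * f x) := h.memLp.integrable_mul hf.memLp
  refine (h.integrable_abs_rpow_mul hu (sub_nonneg.2 hp) huf).congr (.of_forall fun x => ?_)
  simp only [abs_of_nonneg (hpos x)]
  rw [← mul_assoc, ← rpow_add_one' (hpos x) (by linarith)]
  congr 2
  ring

lemma integral_abs_rpow_add_le (h : IsH1 u u') (hu : u ≠ 0) (hpos : ∀ x, 0 ≤ u x)
    (hf : IsH1 f f') (hf0 : f ≠ 0) {p : ℝ} (hp : 2 ≤ p) {t : ℝ}
    (ht : (fun x => u x + t * f x) ≠ 0) :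
    (∫ x, |u x| ^ p) + p * t * (∫ x, u x ^ (p - 1) * f x) ≤ ∫ x, |u x + t * f x| ^ p := by
  have iP := h.integrable_abs_rpow hu hp
  have iQ := (h.integrable_rpow_sub_one_mul hu hpos hf hp).const_mul (p * t)
  rw [← integral_const_mul, ← integral_add iP iQ]
  refine integral_mono (iP.add iQ) ((h.add_mul hu hf hf0 t).integrable_abs_rpow ht hp) fun x => ?_
  calc |u x| ^ p + p * t * (u x ^ (p - 1) * f x)
      = u x ^ p + p * u x ^ (p - 1) * (u x + t * f x - u x) := by
        rw [abs_of_nonneg (hpos x)]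
        ring
    _ ≤ |u x + t * f x| ^ p := rpow_add_mul_sub_le_abs_rpow (by linarith) (hpos x)

end IsH1

section EulerLagrange

variable {p q μ : ℝ} {u u' f f' w w' : ℝ → ℝ}

/-- A ground state of `F_{p,q}` at mass `μ`, given together with its weak derivative `u'`. -/
def IsGroundState (p q μ : ℝ) (u u' : ℝ → ℝ) : Prop :=
  IsH1 u u' ∧ mass u = μ ∧ ∀ w w' : ℝ → ℝ, IsH1 w w' → mass w = μ → Ffun p q u u' ≤ Ffun p q w w'

/-- A bound state of frequency `ω`: a solution of the Euler–Lagrange equation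
`-u'' + ω u = u ^ (p - 1) + u(0) ^ (q - 1) δ₀` in weak form. As the nonlinearities are written
without absolute values, the notion is meant for `u ≥ 0`; the test function is nonzero because
`IsH1 0 f'` does not determine `f'` up to null sets. -/
def IsBoundState (p q ω : ℝ) (u u' : ℝ → ℝ) : Prop :=
  ∀ f f' : ℝ → ℝ, IsH1 f f' → f ≠ 0 →
    (∫ x, u' x * f' x) + ω * (∫ x, u x * f x) =
      (∫ x, u x ^ (p - 1) * f x) + u 0 ^ (q - 1) * f 0

/-- The Lagrange multiplier of a ground state. It comes out in this form because the mass constraint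
is restored by a dilation. -/
def frequency (p : ℝ) (u u' : ℝ → ℝ) : ℝ := (mass u' + 2 / p * ∫ x, |u x| ^ p) / mass u

lemma frequency_nonneg (hp : 0 ≤ p) (u u' : ℝ → ℝ) : 0 ≤ frequency p u u' :=
  div_nonneg (add_nonneg (mass_nonneg u') (mul_nonneg (by positivity)
    (integral_nonneg fun x => by positivity))) (mass_nonneg u)

-- Dilating `w` restores the mass `μ` without changing `w 0`.
lemma IsGroundState.Ffun_le (h : IsGroundState p q μ u u') (hμ : 0 < μ) (hw : IsH1 w w')
    (hw0 : w ≠ 0) :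
    Ffun p q u u' ≤ mass w / μ / 2 * mass w' - 1 / p * ((∫ x, |w x| ^ p) / (mass w / μ)) -
      1 / q * |w 0| ^ q := by
  have hm := hw.mass_pos hw0
  have hl : 0 < mass w / μ := div_pos hm hμ
  rw [← Ffun_comp_mul_left p q w w' hl]
  refine h.2.2 _ _ (hw.comp_mul_left hl) ?_
  rw [mass_comp_mul_left w hl, div_div_cancel₀ hm.ne']

lemma hasDerivAt_dilated_energy {M K P Q M₁ M₂ K₁ K₂ P₁ Q₁ : ℝ} (hM : M ≠ 0) (hp : p ≠ 0)
    (hq : q ≠ 0) :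
    HasDerivAt (fun t => (M + 2 * t * M₁ + t ^ 2 * M₂) / M / 2 * (K + 2 * t * K₁ + t ^ 2 * K₂) -
        1 / p * ((P + p * t * P₁) / ((M + 2 * t * M₁ + t ^ 2 * M₂) / M)) -
        1 / q * (Q + q * t * Q₁))
      (K₁ + (K + 2 / p * P) / M * M₁ - (P₁ + Q₁)) 0 := by
  have hid : HasDerivAt (fun t : ℝ => t) 1 0 := hasDerivAt_id 0
  have quadratic (A B C : ℝ) : HasDerivAt (fun t => A + 2 * t * B + t ^ 2 * C) (2 * B) 0 := by
    exact ((((hid.const_mul 2).mul_const B).const_add A).add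
      ((hid.pow 2).mul_const C)).congr_deriv (by simp)
  have affine (a A B : ℝ) : HasDerivAt (fun t => A + a * t * B) (a * B) 0 := by
    exact (((hid.const_mul a).mul_const B).const_add A).congr_deriv (by simp)
  have hL := (quadratic M M₁ M₂).div_const M
  refine ((((hL.div_const 2).mul (quadratic K K₁ K₂)).sub
    (((affine p P P₁).div hL (by simp [hM])).const_mul (1 / p))).sub
    ((affine q Q Q₁).const_mul (1 / q))).congr_deriv ?_
  simp only [mul_zero, zero_mul, add_zero, ne_eq, OfNat.ofNat_ne_zero, not_false_eq_true, zero_pow,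
    hM, div_self, one_div, inv_mul_cancel_left₀, mul_one, one_pow, div_one]
  field_simp
  ring

lemma eventually_add_mul_ne_zero (hu0 : u ≠ 0) (f : ℝ → ℝ) :
    ∀ᶠ t in 𝓝 (0 : ℝ), (fun x => u x + t * f x) ≠ 0 := by
  obtain ⟨x, hx⟩ := Function.ne_iff.1 hu0
  have hcont : ContinuousAt (fun t => u x + t * f x) 0 := by fun_prop
  filter_upwards [hcont.eventually_ne (y := 0) (by simpa using hx)] with t ht
  exact Function.ne_iff.2 ⟨x, ht⟩

lemma IsGroundState.eventually_Ffun_le (h : IsGroundState p q μ u u') (hp : 2 ≤ p) (hq : 1 ≤ q)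
    (hu0 : u ≠ 0) (hpos : ∀ x, 0 ≤ u x) (hf : IsH1 f f') (hf0 : f ≠ 0) :
    ∀ᶠ t in 𝓝 (0 : ℝ), Ffun p q u u' ≤
      (mass u + 2 * t * (∫ x, u x * f x) + t ^ 2 * mass f) / mass u / 2 *
          (mass u' + 2 * t * (∫ x, u' x * f' x) + t ^ 2 * mass f') -
        1 / p * (((∫ x, |u x| ^ p) + p * t * ∫ x, u x ^ (p - 1) * f x) /
          ((mass u + 2 * t * (∫ x, u x * f x) + t ^ 2 * mass f) / mass u)) -
        1 / q * (u 0 ^ q + q * t * (u 0 ^ (q - 1) * f 0)) := by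
  obtain ⟨hu, rfl, -⟩ := id h
  have hM := hu.mass_pos hu0
  filter_upwards [eventually_add_mul_ne_zero hu0 f] with t ht
  have hw := hu.add_mul hu0 hf hf0 t
  have hL := div_pos (hw.mass_pos ht) hM
  have hmin := h.Ffun_le hM hw ht
  have hP := hu.integral_abs_rpow_add_le hu0 hpos hf hf0 hp ht
  have hQ := rpow_add_mul_sub_le_abs_rpow hq (hpos 0) (y := u 0 + t * f 0)
  rw [add_sub_cancel_left] at hQ
  rw [mass_add_mul hu.memLp hf.memLp] at hmin hL
  rw [mass_add_mul (hu.memLp_deriv hu0) (hf.memLp_deriv hf0)] at hmin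
  refine hmin.trans (sub_le_sub (sub_le_sub_left ?_ _) ?_)
  · gcongr
  · gcongr
    linarith

theorem IsGroundState.isBoundState (h : IsGroundState p q μ u u') (hp : 2 ≤ p) (hq : 1 ≤ q)
    (hu0 : u ≠ 0) (hpos : ∀ x, 0 ≤ u x) : IsBoundState p q (frequency p u u') u u' := by
  intro f f' hf hf0
  have hM := (h.1.mass_pos hu0).ne'
  have hzero := IsLocalMin.hasDerivAt_eq_zero ?_
    (hasDerivAt_dilated_energy (p := p) (q := q) (K := mass u') (P := ∫ x, |u x| ^ p)
      (Q := u 0 ^ q) (M₁ := ∫ x, u x * f x) (M₂ := mass f) (K₁ := ∫ x, u' x * f' x)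
      (K₂ := mass f') (P₁ := ∫ x, u x ^ (p - 1) * f x) (Q₁ := u 0 ^ (q - 1) * f 0)
      hM (by linarith) (by linarith))
  · unfold frequency
    linarith
  · filter_upwards [h.eventually_Ffun_le hp hq hu0 hpos hf hf0] with t ht
    refine le_of_eq_of_le ?_ ht
    have hvalue : Ffun p q u u' =
      1 / 2 * mass u' - 1 / p * (∫ x, |u x| ^ p) - 1 / q * |u 0| ^ q := rfl
    simp [hvalue, hM, abs_of_nonneg (hpos 0)]

end EulerLagrange

section Tent

variable {b h x : ℝ} {u u' f g G H : ℝ → ℝ}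

/-- The tent of height `h` and slopes `± 1` centred at `b`, the test function which turns weak
second derivatives into second differences. -/
def tent (b h x : ℝ) : ℝ := max 0 (h - |x - b|)

/-- The weak derivative of `tent b h`. -/
def tentDeriv (b h : ℝ) : ℝ → ℝ := (Ioc (b - h) b).indicator 1 - (Ioc b (b + h)).indicator 1

@[fun_prop]
lemma continuous_tent (b h : ℝ) : Continuous (tent b h) := by
  unfold tent
  fun_prop

lemma tent_eq_of_mem_Icc_left (hx : x ∈ Icc (b - h) b) : tent b h x = x - (b - h) := by
  unfold tent
  grind

lemma tent_eq_of_mem_Icc_right (hx : x ∈ Icc b (b + h)) : tent b h x = b + h - x := by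
  unfold tent
  grind

lemma tent_eq_zero (hx : x ∉ Ioc (b - h) (b + h)) : tent b h x = 0 := by
  unfold tent
  grind

lemma tent_ne_zero (hh : 0 < h) : tent b h ≠ 0 :=
  Function.ne_iff.2 ⟨b, by simp [tent, hh]⟩

lemma hasCompactSupport_tent (b h : ℝ) : HasCompactSupport (tent b h) :=
  .intro isCompact_Icc fun _ hx => tent_eq_zero fun hx' => hx (Ioc_subset_Icc_self hx')

lemma integrable_mul_tent (hg : Continuous g) (b h : ℝ) : Integrable (fun x => g x * tent b h x) :=
  (hg.mul (continuous_tent b h)).integrable_of_hasCompactSupport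
    (hasCompactSupport_tent b h).mul_left

lemma integrable_indicator_Ioc_one (a c : ℝ) : Integrable ((Ioc a c).indicator (1 : ℝ → ℝ)) :=
  (integrable_indicator_iff measurableSet_Ioc).2 (integrableOn_const (by simp) (by simp))

lemma intervalIntegral_indicator_Ioc_one {m n a c : ℝ} (hmn : m ≤ n) (hac : a ≤ c) :
    ∫ t in a..c, (Ioc m n).indicator (1 : ℝ → ℝ) t = min n (max m c) - min n (max m a) := by
  rw [intervalIntegral.integral_of_le hac, setIntegral_indicator measurableSet_Ioc, Ioc_inter_Ioc]
  simp only [Pi.one_apply, integral_const, smul_eq_mul, mul_one, measureReal_restrict_apply_univ,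
    volume_real_Ioc]
  grind

lemma isH1_tent (hh : 0 < h) : IsH1 (tent b h) (tentDeriv b h) := by
  refine ⟨continuous_tent b h, ?_, ?_, fun a c hac => ?_⟩
  · simpa only [sq] using integrable_mul_tent (continuous_tent b h) b h
  · have hsq (x : ℝ) : tentDeriv b h x ^ 2 =
        (Ioc (b - h) b).indicator 1 x + (Ioc b (b + h)).indicator 1 x := by
      simp only [tentDeriv, Pi.sub_apply, indicator_apply, Pi.one_apply]
      grind
    simp only [hsq]
    exact (integrable_indicator_Ioc_one _ _).add (integrable_indicator_Ioc_one _ _)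
  · have hclamp (x : ℝ) :
        tent b h x = min b (max (b - h) x) - min (b + h) (max b x) + h := by
      by_cases hx : x ∈ Ioc (b - h) (b + h)
      · rcases le_total x b with hxb | hxb
        · rw [tent_eq_of_mem_Icc_left ⟨hx.1.le, hxb⟩]
          grind
        · rw [tent_eq_of_mem_Icc_right ⟨hxb, hx.2⟩]
          grind
      · rw [tent_eq_zero hx]
        grind
    simp only [tentDeriv, Pi.sub_apply]
    rw [intervalIntegral.integral_sub (integrable_indicator_Ioc_one _ _).intervalIntegrable
      (integrable_indicator_Ioc_one _ _).intervalIntegrable,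
      intervalIntegral_indicator_Ioc_one (by linarith) hac,
      intervalIntegral_indicator_Ioc_one (by linarith) hac, hclamp, hclamp]
    ring

lemma IsH1.integral_deriv_mul_tentDeriv (hu : IsH1 u u') (hu0 : u ≠ 0) (hh : 0 < h) :
    ∫ x, u' x * tentDeriv b h x = 2 * u b - u (b - h) - u (b + h) := by
  have hint {a c : ℝ} (hac : a ≤ c) : Integrable ((Ioc a c).indicator u') :=
    (integrable_indicator_iff measurableSet_Ioc).2
      ((intervalIntegrable_iff_integrableOn_Ioc_of_le hac).1 (hu.intervalIntegrable hu0 a c))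
  have hval {a c : ℝ} (hac : a ≤ c) : ∫ x, (Ioc a c).indicator u' x = u c - u a := by
    rw [integral_indicator measurableSet_Ioc, ← intervalIntegral.integral_of_le hac,
      hu.sub_eq_integral]
  have hmul (x : ℝ) : u' x * tentDeriv b h x =
      (Ioc (b - h) b).indicator u' x - (Ioc b (b + h)).indicator u' x := by
    simp only [tentDeriv, Pi.sub_apply, indicator_apply, Pi.one_apply]
    grind
  simp only [hmul]
  rw [integral_sub (hint (by linarith)) (hint (by linarith)), hval (by linarith),
    hval (by linarith)]
  ring

lemma integral_sub_mul_eq (hg : Continuous g) (hG : ∀ x, HasDerivAt G (g x) x)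
    (hH : ∀ x, HasDerivAt H (G x) x) (a c : ℝ) :
    ∫ x in a..c, (x - a) * g x = (c - a) * G c - (H c - H a) := by
  have hGc : Continuous G := continuous_iff_continuousAt.2 fun x => (hG x).continuousAt
  rw [intervalIntegral.integral_mul_deriv_eq_deriv_mul
    (fun x _ => (hasDerivAt_id' x).sub_const a) (fun x _ => hG x) intervalIntegrable_const
    (hg.intervalIntegrable a c)]
  simp only [sub_self, zero_mul, sub_zero, one_mul]
  rw [intervalIntegral.integral_eq_sub_of_hasDerivAt (fun x _ => hH x)
    (hGc.intervalIntegrable a c)]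

lemma integral_mul_tent (hg : Continuous g) (hG : ∀ x, HasDerivAt G (g x) x)
    (hH : ∀ x, HasDerivAt H (G x) x) (hh : 0 < h) :
    ∫ x, g x * tent b h x = H (b + h) + H (b - h) - 2 * H b := by
  have hint := integrable_mul_tent hg b h
  have hleft : ∫ x in (b - h)..b, g x * tent b h x = h * G b - (H b - H (b - h)) := by
    calc ∫ x in (b - h)..b, g x * tent b h x
        = ∫ x in (b - h)..b, (x - (b - h)) * g x := by
          refine intervalIntegral.integral_congr fun x hx => ?_
          rw [uIcc_of_le (by linarith)] at hx
          simp only [tent_eq_of_mem_Icc_left hx, mul_comm]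
      _ = h * G b - (H b - H (b - h)) := by
          rw [integral_sub_mul_eq hg hG hH, sub_sub_cancel]
  have hright : ∫ x in b..(b + h), g x * tent b h x = -(h * G b) + (H (b + h) - H b) := by
    calc ∫ x in b..(b + h), g x * tent b h x
        = ∫ x in (b + h)..b, (x - (b + h)) * g x := by
          rw [intervalIntegral.integral_symm, ← intervalIntegral.integral_neg]
          refine intervalIntegral.integral_congr fun x hx => ?_
          rw [uIcc_of_ge (by linarith)] at hx
          simp only [tent_eq_of_mem_Icc_right hx]
          ring
      _ = -(h * G b) + (H (b + h) - H b) := by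
          rw [integral_sub_mul_eq hg hG hH]
          ring
  rw [← setIntegral_eq_integral_of_forall_compl_eq_zero (s := Ioc (b - h) (b + h))
    (fun x hx => by rw [tent_eq_zero hx, mul_zero]),
    ← intervalIntegral.integral_of_le (by linarith),
    ← intervalIntegral.integral_add_adjacent_intervals (b := b)
      hint.intervalIntegrable hint.intervalIntegrable, hleft, hright]
  ring

lemma exists_hasDerivAt_of_second_difference_eq (hf : Continuous f) (hg : Continuous g)
    (hfg : ∀ b h, 0 < h → f (b + h) + f (b - h) - 2 * f b = ∫ x, g x * tent b h x) :
    ∃ D : ℝ → ℝ, (∀ x, HasDerivAt f (D x) x) ∧ ∀ x, HasDerivAt D (g x) x := by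
  have primitive (k : ℝ → ℝ) (hk : Continuous k) : ∃ K : ℝ → ℝ, ∀ x, HasDerivAt K (k x) x :=
    ⟨fun x => ∫ t in (0 : ℝ)..x, k t, fun x => (hk.integral_hasStrictDerivAt 0 x).hasDerivAt⟩
  obtain ⟨G, hG⟩ := primitive g hg
  obtain ⟨H, hH⟩ := primitive G (continuous_iff_continuousAt.2 fun x => (hG x).continuousAt)
  have hHc : Continuous H := continuous_iff_continuousAt.2 fun x => (hH x).continuousAt
  obtain ⟨β, hβ⟩ := exists_affine_of_second_difference_eq_zero (hf.sub hHc) fun b h hh => by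
    have hdiff := hfg b h hh
    rw [integral_mul_tent hg hG hH hh] at hdiff
    simp only [Pi.sub_apply]
    linarith
  refine ⟨fun x => β + G x, fun x => ?_, fun x => (hG x).const_add β⟩
  have hfH : f = fun x => (f 0 - H 0) + β * x + H x := by
    funext x
    linarith [hβ x, Pi.sub_apply f H x, Pi.sub_apply f H 0]
  rw [hfH]
  exact ((((hasDerivAt_id' x).const_mul β).const_add _).add (hH x)).congr_deriv (by rw [mul_one])

theorem IsBoundState.exists_hasDerivAt {p q ω : ℝ} (h : IsBoundState p q ω u u') (hu : IsH1 u u')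
    (hu0 : u ≠ 0) (hp : 1 ≤ p) :
    ∃ D : ℝ → ℝ, (∀ x, HasDerivAt (fun y => u y + u 0 ^ (q - 1) / 2 * |y|) (D x) x) ∧
      ∀ x, HasDerivAt D (ω * u x - u x ^ (p - 1)) x := by
  have hc := hu.continuous
  have hpow : Continuous fun x => u x ^ (p - 1) := hc.rpow_const fun _ => Or.inr (by linarith)
  refine exists_hasDerivAt_of_second_difference_eq (by fun_prop) (by fun_prop) fun b h' hh => ?_
  have hweak := h (tent b h') _ (isH1_tent hh) (tent_ne_zero hh)
  rw [hu.integral_deriv_mul_tentDeriv hu0 hh] at hweak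
  have habs : |b + h'| + |b - h'| - 2 * |b| = 2 * tent b h' 0 := by
    unfold tent
    grind
  have hsplit : ∫ x, (ω * u x - u x ^ (p - 1)) * tent b h' x =
      ω * (∫ x, u x * tent b h' x) - ∫ x, u x ^ (p - 1) * tent b h' x := by
    simp only [sub_mul, mul_assoc]
    rw [integral_sub ((integrable_mul_tent hc b h').const_mul ω) (integrable_mul_tent hpow b h'),
      integral_const_mul]
  rw [hsplit]
  linear_combination -hweak + u 0 ^ (q - 1) / 2 * habs

end Tent

section HalfLine

variable {p ω κ c s : ℝ} {U V D r : ℝ → ℝ}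

lemma le_mul_exp_of_hasDerivWithinAt_le
    (hU : ∀ x, 0 ≤ x → HasDerivWithinAt U (D x) (Ici 0) x) (hD : ∀ x, 0 ≤ x → D x ≤ c * U x)
    {x : ℝ} (hx : 0 ≤ x) : U x ≤ U 0 * exp (c * x) := by
  have hgronwall := le_gronwallBound_of_liminf_deriv_right_le (f := U) (f' := D) (ε := 0) (b := x)
    (fun y hy => ((hU y hy.1).mono Icc_subset_Ici_self).continuousWithinAt)
    (fun y hy _ hr => ((hU y hy.1).mono (Ici_subset_Ici.2 hy.1)).liminf_right_slope_le hr)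
    le_rfl (fun y hy => (hD y hy.1).trans_eq (add_zero _).symm) x ⟨hx, le_rfl⟩
  rwa [gronwallBound_ε0, sub_zero] at hgronwall

lemma deriv_neg_of_lt_of_deriv_eq_zero
    (hU : ∀ x, 0 ≤ x → HasDerivWithinAt U (D x) (Ici 0) x) (hDc : ContinuousOn D (Ici 0))
    (hD0 : D 0 < 0) (hzero : ∀ x, 0 ≤ x → D x = 0 → U 0 < U x) {x : ℝ} (hx : 0 ≤ x) :
    D x < 0 := by
  by_contra! hDx
  have hcompact : IsCompact (Icc 0 x ∩ D ⁻¹' Ici 0) :=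
    isCompact_Icc.of_isClosed_subset ((hDc.mono Icc_subset_Ici_self).preimage_isClosed_of_isClosed
      isClosed_Icc isClosed_Ici) inter_subset_left
  obtain ⟨z, ⟨⟨hz, hzx⟩, hDz⟩, hleast⟩ := hcompact.exists_isLeast ⟨x, ⟨hx, le_rfl⟩, hDx⟩
  have hneg (y : ℝ) (hy : 0 ≤ y) (hyz : y < z) : D y < 0 := by
    by_contra! hDy
    exact hyz.not_ge (hleast ⟨⟨hy, hyz.le.trans hzx⟩, hDy⟩)
  have hDz0 : D z = 0 := by
    obtain ⟨y, hy, hDy⟩ :=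
      intermediate_value_Icc hz (hDc.mono Icc_subset_Ici_self) ⟨hD0.le, hDz⟩
    rcases hy.2.eq_or_lt with rfl | hyz
    · exact hDy
    · exact absurd hDy (hneg y hy.1 hyz).ne
  have hanti : AntitoneOn U (Icc 0 z) := by
    refine antitoneOn_of_hasDerivWithinAt_nonpos (convex_Icc 0 z) (f' := D)
      (fun y hy => ((hU y hy.1).mono Icc_subset_Ici_self).continuousWithinAt) ?_ ?_
    all_goals
      intro y hy
      rw [interior_Icc] at *
    · exact (hU y hy.1.le).mono fun w hw => hw.1.le
    · exact (hneg y hy.1.le hy.2).le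
  exact (hzero z hz hDz0).not_ge (hanti ⟨le_rfl, hz⟩ ⟨hz, le_rfl⟩ hz)

/-- A nonnegative finite-energy solution of `U'' = ω U - U ^ (p - 1)` on `[0, ∞)`, where `D = U'`.
The values on `(-∞, 0)` play no role. -/
structure IsHalfLineSolution (p ω : ℝ) (U D : ℝ → ℝ) : Prop where
  nonneg : ∀ x, 0 ≤ x → 0 ≤ U x
  hasDerivWithinAt : ∀ x, 0 ≤ x → HasDerivWithinAt U (D x) (Ici 0) x
  hasDerivWithinAt_deriv : ∀ x, 0 ≤ x → HasDerivWithinAt D (ω * U x - U x ^ (p - 1)) (Ici 0) x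
  integrableOn_sq : IntegrableOn (fun x => U x ^ 2) (Ioi 0)
  integrableOn_deriv_sq : IntegrableOn (fun x => D x ^ 2) (Ioi 0)
  integrableOn_rpow : IntegrableOn (fun x => U x ^ p) (Ioi 0)

namespace IsHalfLineSolution

theorem deriv_sq_eq (h : IsHalfLineSolution p ω U D) (hp : 1 ≤ p) {x : ℝ} (hx : 0 ≤ x) :
    D x ^ 2 = ω * U x ^ 2 - 2 / p * U x ^ p := by
  set E : ℝ → ℝ := fun x => D x ^ 2 - ω * U x ^ 2 + 2 / p * U x ^ p with hE
  have hderiv (y : ℝ) (hy : 0 ≤ y) : HasDerivWithinAt E 0 (Ici 0) y := by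
    have hU := h.hasDerivWithinAt y hy
    refine ((((h.hasDerivWithinAt_deriv y hy).pow 2).sub ((hU.pow 2).const_mul ω)).add
      ((hU.rpow_const (p := p) (Or.inr hp)).const_mul (2 / p))).congr_deriv ?_
    field_simp
    ring
  have hconst (y : ℝ) (hy : 0 ≤ y) : E y = E 0 :=
    constant_of_has_deriv_right_zero
      (fun z hz => ((hderiv z hz.1).mono Icc_subset_Ici_self).continuousWithinAt)
      (fun z hz => (hderiv z hz.1).mono (Ici_subset_Ici.2 hz.1)) y ⟨hy, le_rfl⟩
  have hE0 : E 0 = 0 :=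
    eq_zero_of_integrableOn_of_forall_eq measurableSet_Ioi (by simp)
      ((h.integrableOn_deriv_sq.sub (h.integrableOn_sq.const_mul ω)).add
        (h.integrableOn_rpow.const_mul (2 / p))) fun y hy => hconst y (le_of_lt hy)
  have hEx := (hconst x hx).trans hE0
  simp only [hE] at hEx
  linarith

lemma abs_deriv_le (h : IsHalfLineSolution p ω U D) (hp : 1 ≤ p) (hω : 0 ≤ ω) {x : ℝ}
    (hx : 0 ≤ x) : |D x| ≤ √ω * U x := by
  have hU := h.nonneg x hx
  refine abs_le_of_sq_le_sq ?_ (by positivity)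
  rw [mul_pow, sq_sqrt hω, h.deriv_sq_eq hp hx, sub_le_self_iff]
  positivity

lemma eq_zero (h : IsHalfLineSolution p ω U D) (hp : 1 ≤ p) (hω : 0 ≤ ω) (hU0 : U 0 = 0) {x : ℝ}
    (hx : 0 ≤ x) : U x = 0 := by
  have hle := le_mul_exp_of_hasDerivWithinAt_le h.hasDerivWithinAt
    (fun y hy => (le_abs_self _).trans (h.abs_deriv_le hp hω hy)) hx
  rw [hU0, zero_mul] at hle
  exact hle.antisymm (h.nonneg x hx)

lemma pos (h : IsHalfLineSolution p ω U D) (hp : 1 ≤ p) (hω : 0 ≤ ω) (hU0 : 0 < U 0) {x : ℝ}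
    (hx : 0 ≤ x) : 0 < U x := by
  have hle := le_mul_exp_of_hasDerivWithinAt_le (U := fun y => -U y) (c := -√ω)
    (fun y hy => (h.hasDerivWithinAt y hy).neg)
    (fun y hy => by linarith [neg_abs_le (D y), h.abs_deriv_le hp hω hy]) hx
  have hpos := mul_pos hU0 (exp_pos (-√ω * x))
  linarith

lemma omega_eq (h : IsHalfLineSolution p ω U D) (hp : 1 ≤ p) (hU0 : 0 < U 0)
    (hD0 : D 0 = -(κ * U 0)) : ω = 2 / p * U 0 ^ (p - 2) + κ ^ 2 := by
  have henergy := h.deriv_sq_eq hp le_rfl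
  rw [hD0, rpow_eq_rpow_sub_two_mul_sq (by linarith) hU0.le] at henergy
  refine mul_right_cancel₀ (pow_pos hU0 2).ne' ?_
  linarith

lemma deriv_sq_eq_sq_mul (h : IsHalfLineSolution p ω U D) (hp : 1 ≤ p) (hU0 : 0 < U 0)
    (hD0 : D 0 = -(κ * U 0)) {x : ℝ} (hx : 0 ≤ x) :
    D x ^ 2 = U x ^ 2 * (2 / p * (U 0 ^ (p - 2) - U x ^ (p - 2)) + κ ^ 2) := by
  rw [h.deriv_sq_eq hp hx, h.omega_eq hp hU0 hD0,
    rpow_eq_rpow_sub_two_mul_sq (by linarith) (h.nonneg x hx)]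
  ring

lemma deriv_neg (h : IsHalfLineSolution p ω U D) (hp : 2 ≤ p) (hκ : 0 < κ) (hU0 : 0 < U 0)
    (hD0 : D 0 = -(κ * U 0)) {x : ℝ} (hx : 0 ≤ x) : D x < 0 := by
  have hω := h.omega_eq (by linarith) hU0 hD0
  refine deriv_neg_of_lt_of_deriv_eq_zero h.hasDerivWithinAt
    (fun y hy => (h.hasDerivWithinAt_deriv y hy).continuousWithinAt)
    (by rw [hD0]; linarith [mul_pos hκ hU0]) (fun y hy hDy => ?_) hx
  have hUy : 0 < U y := h.pos (by linarith) (by rw [hω]; positivity) hU0 hy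
  by_contra! hle
  have hpow : 0 ≤ U 0 ^ (p - 2) - U y ^ (p - 2) :=
    sub_nonneg.2 (rpow_le_rpow hUy.le hle (by linarith))
  have hsq := h.deriv_sq_eq_sq_mul (by linarith) hU0 hD0 hy
  rw [hDy, zero_pow two_ne_zero] at hsq
  exact absurd hsq (by positivity)

lemma apply_le (h : IsHalfLineSolution p ω U D) (hp : 2 ≤ p) (hκ : 0 < κ) (hU0 : 0 < U 0)
    (hD0 : D 0 = -(κ * U 0)) {x : ℝ} (hx : 0 ≤ x) : U x ≤ U 0 := by
  have hle := le_mul_exp_of_hasDerivWithinAt_le (c := 0) h.hasDerivWithinAt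
    (fun y hy => by linarith [h.deriv_neg hp hκ hU0 hD0 hy]) hx
  simpa using hle

end IsHalfLineSolution

/-- The rate `r` in the equation `U' = -U r(U)` for a half-line solution `U` with `U 0 = s` and
`U' 0 = -κ s`, as given by conservation of energy. -/
def decayRate (p κ s y : ℝ) : ℝ := √(2 / p * (s ^ (p - 2) - y ^ (p - 2)) + κ ^ 2)

/-- A positive solution of `U' = -U r(U)` on `[0, ∞)` which starts from its maximum `s`. -/
structure IsDecayProfile (r : ℝ → ℝ) (s : ℝ) (U : ℝ → ℝ) : Prop where
  apply_zero : U 0 = s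
  mem_Ioc : ∀ x, 0 ≤ x → U x ∈ Ioc 0 s
  hasDerivWithinAt : ∀ x, 0 ≤ x → HasDerivWithinAt U (-(U x * r (U x))) (Ici 0) x

theorem IsHalfLineSolution.isDecayProfile (h : IsHalfLineSolution p ω U D) (hp : 2 ≤ p)
    (hκ : 0 < κ) (hU0 : 0 < U 0) (hD0 : D 0 = -(κ * U 0)) :
    IsDecayProfile (decayRate p κ (U 0)) (U 0) U := by
  have hω : 0 ≤ ω := by
    rw [h.omega_eq (by linarith) hU0 hD0]
    positivity
  refine ⟨rfl, fun x hx => ⟨h.pos (by linarith) hω hU0 hx, h.apply_le hp hκ hU0 hD0 hx⟩,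
    fun x hx => (h.hasDerivWithinAt x hx).congr_deriv ?_⟩
  have hDx : √(D x ^ 2) = -D x := by rw [sqrt_sq_eq_abs, abs_of_neg (h.deriv_neg hp hκ hU0 hD0 hx)]
  rw [h.deriv_sq_eq_sq_mul (by linarith) hU0 hD0 hx, sqrt_mul (sq_nonneg _),
    sqrt_sq (h.nonneg x hx)] at hDx
  rw [decayRate, hDx, neg_neg]

lemma continuous_decayRate (hp : 2 ≤ p) (κ s : ℝ) : Continuous (decayRate p κ s) := by
  have hpow : Continuous fun y : ℝ => y ^ (p - 2) :=
    continuous_id.rpow_const fun _ => Or.inr (by linarith)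
  unfold decayRate
  fun_prop

lemma decayRate_radicand_pos (hp : 2 ≤ p) (hκ : 0 < κ) {y : ℝ} (hy : y ∈ Icc 0 s) :
    0 < 2 / p * (s ^ (p - 2) - y ^ (p - 2)) + κ ^ 2 := by
  have hpow : 0 ≤ s ^ (p - 2) - y ^ (p - 2) :=
    sub_nonneg.2 (rpow_le_rpow hy.1 hy.2 (by linarith))
  positivity

lemma decayRate_pos (hp : 2 ≤ p) (hκ : 0 < κ) {y : ℝ} (hy : y ∈ Icc 0 s) : 0 < decayRate p κ s y :=
  sqrt_pos.2 (decayRate_radicand_pos hp hκ hy)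

lemma contDiffAt_decayRate (hp : 2 ≤ p) (hκ : 0 < κ) {y : ℝ} (hy : y ∈ Ioc 0 s) :
    ContDiffAt ℝ 1 (decayRate p κ s) y := by
  have hpow : ContDiffAt ℝ 1 (fun y : ℝ => y ^ (p - 2)) y :=
    contDiffAt_id.rpow_const_of_ne hy.1.ne'
  exact ((contDiffAt_const.mul (contDiffAt_const.sub hpow)).add contDiffAt_const).sqrt
    (decayRate_radicand_pos hp hκ (Ioc_subset_Icc_self hy)).ne'

namespace IsDecayProfile

lemma continuousOn (h : IsDecayProfile r s U) : ContinuousOn U (Ici 0) := fun x hx =>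
  (h.hasDerivWithinAt x hx).continuousWithinAt

lemma exists_forall_mem_Icc (h : IsDecayProfile r s U) {T : ℝ} (hT : 0 ≤ T) :
    ∃ m, 0 < m ∧ ∀ x ∈ Icc 0 T, U x ∈ Icc m s := by
  obtain ⟨x, hx, hmin⟩ := isCompact_Icc.exists_isMinOn (nonempty_Icc.2 hT)
    (h.continuousOn.mono Icc_subset_Ici_self)
  exact ⟨U x, (h.mem_Ioc x hx.1).1, fun y hy => ⟨hmin hy, (h.mem_Ioc y hy.1).2⟩⟩

theorem eqOn (hU : IsDecayProfile r s U) (hV : IsDecayProfile r s V)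
    (hr : ∀ y ∈ Ioc 0 s, ContDiffAt ℝ 1 r y) : EqOn U V (Ici 0) := by
  intro T (hT : 0 ≤ T)
  obtain ⟨m, hm, hmU⟩ := hU.exists_forall_mem_Icc hT
  obtain ⟨n, hn, hnV⟩ := hV.exists_forall_mem_Icc hT
  have hsmooth : ContDiffOn ℝ 1 (fun y => -(y * r y)) (Icc (min m n) s) := fun y hy =>
    (contDiffAt_id.mul (hr y ⟨(lt_min hm hn).trans_le hy.1, hy.2⟩)).neg.contDiffWithinAt
  obtain ⟨K, hK⟩ := hsmooth.exists_lipschitzOnWith one_ne_zero (convex_Icc _ _) isCompact_Icc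
  refine ODE_solution_unique_of_mem_Icc_right (fun _ _ => hK)
    (hU.continuousOn.mono Icc_subset_Ici_self)
    (fun t ht => (hU.hasDerivWithinAt t ht.1).mono (Ici_subset_Ici.2 ht.1))
    (fun t ht => Icc_subset_Icc_left (min_le_left m n) (hmU t (Ico_subset_Icc_self ht)))
    (hV.continuousOn.mono Icc_subset_Ici_self)
    (fun t ht => (hV.hasDerivWithinAt t ht.1).mono (Ici_subset_Ici.2 ht.1))
    (fun t ht => Icc_subset_Icc_left (min_le_right m n) (hnV t (Ico_subset_Icc_self ht)))
    (hU.apply_zero.trans hV.apply_zero.symm) ⟨hT, le_rfl⟩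

lemma tendsto_zero (h : IsDecayProfile r s U) (hr : ContinuousOn r (Icc 0 s))
    (hrpos : ∀ y ∈ Icc 0 s, 0 < r y) : Tendsto U atTop (𝓝 0) := by
  have hs : 0 ≤ s := (h.mem_Ioc 0 le_rfl).1.le.trans (h.mem_Ioc 0 le_rfl).2
  obtain ⟨y, hy, hmin⟩ := isCompact_Icc.exists_isMinOn (nonempty_Icc.2 hs) hr
  have hle {x : ℝ} (hx : 0 ≤ x) : U x ≤ U 0 * exp (-r y * x) := by
    refine le_mul_exp_of_hasDerivWithinAt_le h.hasDerivWithinAt (fun z hz => ?_) hx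
    have hUz := h.mem_Ioc z hz
    have hry := mul_le_mul_of_nonneg_left (hmin (Ioc_subset_Icc_self hUz)) hUz.1.le
    linarith
  have hlim : Tendsto (fun x => U 0 * exp (-r y * x)) atTop (𝓝 0) := by
    simpa using (tendsto_exp_atBot.comp (tendsto_id.const_mul_atTop_of_neg
      (neg_lt_zero.2 (hrpos y hy)))).const_mul (U 0)
  exact tendsto_of_tendsto_of_tendsto_of_le_of_le' tendsto_const_nhds hlim
    ((eventually_ge_atTop 0).mono fun x hx => (h.mem_Ioc x hx).1.le)
    ((eventually_ge_atTop 0).mono fun x hx => hle hx)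

-- The substitution `y = U x`: the primitive `Φ` of `y / r y` satisfies `(Φ ∘ U)' = -U ^ 2`.
theorem integral_sq_eq (h : IsDecayProfile r s U) (hr : Continuous r)
    (hrpos : ∀ y ∈ Icc 0 s, 0 < r y) : ∫ x in Ioi 0, U x ^ 2 = ∫ y in (0)..s, y / r y := by
  have hs : 0 ≤ s := (h.mem_Ioc 0 le_rfl).1.le.trans (h.mem_Ioc 0 le_rfl).2
  have hcont (y : ℝ) (hy : y ∈ Icc 0 s) : ContinuousAt (fun y => y / r y) y :=
    continuousAt_id.div hr.continuousAt (hrpos y hy).ne'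
  set Φ : ℝ → ℝ := fun z => ∫ y in (0)..z, y / r y
  have hΦderiv (z : ℝ) (hz : z ∈ Icc 0 s) : HasDerivAt Φ (z / r z) z := by
    refine intervalIntegral.integral_hasDerivAt_right (ContinuousOn.intervalIntegrable fun y hy =>
      (hcont y ?_).continuousWithinAt) ?_ (hcont z hz)
    · rw [uIcc_of_le hz.1] at hy
      exact Icc_subset_Icc_right hz.2 hy
    · exact (measurable_id.div hr.measurable).stronglyMeasurable.stronglyMeasurableAtFilter
  have hUmem (x : ℝ) (hx : 0 ≤ x) : U x ∈ Icc 0 s := Ioc_subset_Icc_self (h.mem_Ioc x hx)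
  have hderiv (x : ℝ) (hx : x ∈ Ioi 0) : HasDerivAt (Φ ∘ U) (-U x ^ 2) x := by
    have hx0 : 0 ≤ x := le_of_lt hx
    refine ((hΦderiv _ (hUmem x hx0)).comp x
      ((h.hasDerivWithinAt x hx0).hasDerivAt (Ici_mem_nhds hx))).congr_deriv ?_
    have hrx := (hrpos _ (hUmem x hx0)).ne'
    field_simp
  have hlim : Tendsto (Φ ∘ U) atTop (𝓝 0) := by
    have hΦ0 := (hΦderiv 0 ⟨le_rfl, hs⟩).continuousAt.tendsto
    rw [show Φ 0 = 0 from intervalIntegral.integral_same] at hΦ0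
    exact hΦ0.comp (h.tendsto_zero hr.continuousOn hrpos)
  have hFTC := integral_Ioi_of_hasDerivAt_of_nonpos
    ((hΦderiv _ (hUmem 0 le_rfl)).continuousAt.comp_continuousWithinAt
      (h.continuousOn 0 self_mem_Ici)) hderiv (fun x _ => neg_nonpos.2 (sq_nonneg _)) hlim
  rw [integral_neg, Function.comp_apply, h.apply_zero, zero_sub, neg_inj] at hFTC
  exact hFTC

end IsDecayProfile

end HalfLine

section HalfMass

variable {p q s : ℝ}

/-- The mass on a half line of a ground state with maximum `s`: its decay rate has
`κ = s ^ (q - 2) / 2`, since the jump `-s ^ (q - 1)` of the derivative at `0` is shared equally by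
the two sides. -/
def halfMass (p q s : ℝ) : ℝ := ∫ y in (0)..s, y / decayRate p (s ^ (q - 2) / 2) s y

/-- `s⁻² * decayRate p (s ^ (q - 2) / 2) s (s * z)`, the decay rate for amplitude `1`. -/
def scaledRate (p q s z : ℝ) : ℝ :=
  √(2 / p * s ^ (p - 6) * (1 - z ^ (p - 2)) + (s ^ (q - 4) / 2) ^ 2)

lemma decayRate_mul (hs : 0 < s) {z : ℝ} (hz : 0 ≤ z) :
    decayRate p (s ^ (q - 2) / 2) s (s * z) = s ^ 2 * scaledRate p q s z := by
  have hp4 : s ^ (p - 2) = s ^ (p - 6) * s ^ 4 := by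
    rw [← rpow_natCast, ← rpow_add hs]
    norm_num
    ring_nf
  have hq2 : s ^ (q - 2) = s ^ (q - 4) * s ^ 2 := by
    rw [← rpow_natCast, ← rpow_add hs]
    norm_num
    ring_nf
  have hradicand : 2 / p * (s ^ (p - 2) - (s * z) ^ (p - 2)) + (s ^ (q - 2) / 2) ^ 2 =
      (s ^ 2) ^ 2 * (2 / p * s ^ (p - 6) * (1 - z ^ (p - 2)) + (s ^ (q - 4) / 2) ^ 2) := by
    rw [mul_rpow hs.le hz, hp4, hq2]
    ring
  rw [decayRate, hradicand, sqrt_mul (by positivity), sqrt_sq (by positivity), scaledRate]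

lemma halfMass_eq_integral_scaledRate (hs : 0 < s) :
    halfMass p q s = ∫ z in (0)..1, z / scaledRate p q s z := by
  have hsubst := intervalIntegral.mul_integral_comp_mul_left (a := 0) (b := 1)
    (f := fun y => y / decayRate p (s ^ (q - 2) / 2) s y) s
  rw [mul_zero, mul_one, ← intervalIntegral.integral_const_mul] at hsubst
  rw [halfMass, ← hsubst]
  refine intervalIntegral.integral_congr fun z hz => ?_
  rw [uIcc_of_le zero_le_one] at hz
  simp only [decayRate_mul hs hz.1]
  field_simp

lemma scaledRate_pos (hp : 2 ≤ p) (hs : 0 < s) {z : ℝ} (hz : z ∈ Icc 0 1) :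
    0 < scaledRate p q s z := by
  have hpow : 0 ≤ 1 - z ^ (p - 2) := sub_nonneg.2 (rpow_le_one hz.1 hz.2 (by linarith))
  exact sqrt_pos.2 (by positivity)

lemma scaledRate_lt (hp : 2 ≤ p) (hp' : p ≤ 6) (hq : q < 4) (hs : 0 < s) {t z : ℝ} (hst : s < t)
    (hz : z ∈ Icc 0 1) : scaledRate p q t z < scaledRate p q s z := by
  have ht := hs.trans hst
  have hpow : 0 ≤ 1 - z ^ (p - 2) := sub_nonneg.2 (rpow_le_one hz.1 hz.2 (by linarith))
  have hp6 : t ^ (p - 6) ≤ s ^ (p - 6) := rpow_le_rpow_of_nonpos hs hst.le (by linarith)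
  have hq4 : t ^ (q - 4) < s ^ (q - 4) := rpow_lt_rpow_of_neg hs hst (by linarith)
  have hfirst : 2 / p * t ^ (p - 6) * (1 - z ^ (p - 2)) ≤ 2 / p * s ^ (p - 6) * (1 - z ^ (p - 2)) :=
    mul_le_mul_of_nonneg_right (mul_le_mul_of_nonneg_left hp6 (by positivity)) hpow
  have hsecond : (t ^ (q - 4) / 2) ^ 2 < (s ^ (q - 4) / 2) ^ 2 :=
    pow_lt_pow_left₀ (by linarith) (by positivity) two_ne_zero
  exact sqrt_lt_sqrt (by positivity) (add_lt_add_of_le_of_lt hfirst hsecond)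

lemma continuousOn_div_scaledRate (hp : 2 ≤ p) (hs : 0 < s) :
    ContinuousOn (fun z => z / scaledRate p q s z) (Icc 0 1) := by
  have hpow : Continuous fun z : ℝ => z ^ (p - 2) :=
    continuous_id.rpow_const fun _ => Or.inr (by linarith)
  refine continuousOn_id.div ?_ fun z hz => (scaledRate_pos hp hs hz).ne'
  unfold scaledRate
  fun_prop

theorem halfMass_strictMonoOn (hp : 2 ≤ p) (hp' : p ≤ 6) (hq : q < 4) :
    StrictMonoOn (halfMass p q) (Ioi 0) := by
  intro s (hs : 0 < s) t (ht : 0 < t) hst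
  have hlt (z : ℝ) (hz : z ∈ Ioc 0 1) : z / scaledRate p q s z < z / scaledRate p q t z :=
    div_lt_div_of_pos_left hz.1 (scaledRate_pos hp ht (Ioc_subset_Icc_self hz))
      (scaledRate_lt hp hp' hq hs hst (Ioc_subset_Icc_self hz))
  rw [halfMass_eq_integral_scaledRate hs, halfMass_eq_integral_scaledRate ht]
  exact intervalIntegral.integral_lt_integral_of_continuousOn_of_le_of_exists_lt one_pos
    (continuousOn_div_scaledRate hp hs) (continuousOn_div_scaledRate hp ht)
    (fun z hz => (hlt z hz).le) ⟨1, ⟨zero_le_one, le_rfl⟩, hlt 1 ⟨one_pos, le_rfl⟩⟩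

end HalfMass

section GroundStates

variable {p q ω κ : ℝ} {u u' v v' D : ℝ → ℝ}

lemma IsH1.isHalfLineSolution (hu : IsH1 u u') (hu0 : u ≠ 0) (hpos : ∀ x, 0 ≤ u x) (hp : 2 ≤ p)
    (huD : ∀ x, HasDerivAt (fun y => u y + κ * |y|) (D x) x)
    (hD : ∀ x, HasDerivAt D (ω * u x - u x ^ (p - 1)) x) :
    IsHalfLineSolution p ω u (fun x => D x - κ) := by
  have hderiv (x : ℝ) (hx : 0 ≤ x) : HasDerivWithinAt u (D x - κ) (Ici 0) x := by
    refine (((huD x).sub ((hasDerivAt_id' x).const_mul κ)).hasDerivWithinAt.congr_of_mem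
      (fun y (hy : 0 ≤ y) => ?_) hx).congr_deriv (by rw [mul_one])
    simp only [Pi.sub_apply, abs_of_nonneg hy, add_sub_cancel_right]
  refine ⟨fun x _ => hpos x, hderiv, fun x _ => ((hD x).sub_const κ).hasDerivWithinAt,
    hu.integrable_sq.integrableOn, ?_, ?_⟩
  · refine hu.integrable_deriv_sq.integrableOn.congr ?_
    filter_upwards [ae_restrict_of_ae (hu.ae_hasDerivAt hu0), ae_restrict_mem measurableSet_Ioi]
      with x hx (hx0 : 0 < x)
    rw [hx.unique ((hderiv x hx0.le).hasDerivAt (Ici_mem_nhds hx0))]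
  · simpa only [abs_of_nonneg (hpos _)] using (hu.integrable_abs_rpow hu0 hp).integrableOn

lemma IsBoundState.exists_isHalfLineSolution (h : IsBoundState p q ω u u') (hu : IsH1 u u')
    (hu0 : u ≠ 0) (hpos : ∀ x, 0 ≤ u x) (hp : 2 ≤ p) :
    ∃ D : ℝ → ℝ, IsHalfLineSolution p ω u (fun x => D x - u 0 ^ (q - 1) / 2) ∧
      IsHalfLineSolution p ω (fun x => u (-x)) (fun x => -D (-x) - u 0 ^ (q - 1) / 2) := by
  obtain ⟨D, huD, hD⟩ := h.exists_hasDerivAt hu hu0 (by linarith)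
  have hneg0 : (fun x => u (-x)) ≠ 0 := fun h0 => hu0 <| funext fun x => by
    simpa using congrFun h0 (-x)
  refine ⟨D, hu.isHalfLineSolution hu0 hpos hp huD hD,
    hu.comp_neg.isHalfLineSolution hneg0 (fun x => hpos (-x)) hp (fun x => ?_) fun x => ?_⟩
  · simpa [Function.comp_def] using (huD (-x)).comp x (hasDerivAt_neg x)
  · exact ((hD (-x)).comp x (hasDerivAt_neg x)).neg.congr_deriv (by ring)

lemma IsBoundState.apply_zero_pos (h : IsBoundState p q ω u u') (hu : IsH1 u u') (hu0 : u ≠ 0)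
    (hpos : ∀ x, 0 ≤ u x) (hp : 2 ≤ p) (hω : 0 ≤ ω) : 0 < u 0 := by
  obtain ⟨D, hright, hleft⟩ := h.exists_isHalfLineSolution hu hu0 hpos hp
  refine (hpos 0).lt_of_ne fun hzero => hu0 (funext fun x => ?_)
  rcases le_total 0 x with hx | hx
  · exact hright.eq_zero (by linarith) hω hzero.symm hx
  · simpa using hleft.eq_zero (by linarith) hω (by simpa using hzero.symm) (neg_nonneg.2 hx)

-- Energy conservation determines the squares of the two one-sided derivatives at `0`, which are
-- therefore opposite or equal; as they differ by the jump `u(0) ^ (q - 1) ≠ 0`, they are opposite.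
theorem IsBoundState.isDecayProfile (h : IsBoundState p q ω u u') (hu : IsH1 u u')
    (hu0 : u ≠ 0) (hpos : ∀ x, 0 ≤ u x) (hp : 2 ≤ p) (hω : 0 ≤ ω) :
    IsDecayProfile (decayRate p (u 0 ^ (q - 2) / 2) (u 0)) (u 0) u ∧
      IsDecayProfile (decayRate p (u 0 ^ (q - 2) / 2) (u 0)) (u 0) (fun x => u (-x)) := by
  have hs := h.apply_zero_pos hu hu0 hpos hp hω
  obtain ⟨D, hright, hleft⟩ := h.exists_isHalfLineSolution hu hu0 hpos hp
  have hκ : u 0 ^ (q - 1) / 2 = u 0 ^ (q - 2) / 2 * u 0 := by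
    rw [div_mul_eq_mul_div, ← rpow_add_one hs.ne']
    ring_nf
  have hD0 : D 0 = 0 := by
    have hR := hright.deriv_sq_eq (by linarith) le_rfl
    have hL := hleft.deriv_sq_eq (by linarith) le_rfl
    simp only [neg_zero] at hL
    have hmul : D 0 * u 0 ^ (q - 1) = 0 := by linarith
    exact (mul_eq_zero.1 hmul).resolve_right (rpow_pos_of_pos hs _).ne'
  have hκpos : 0 < u 0 ^ (q - 2) / 2 := by positivity
  refine ⟨hright.isDecayProfile hp hκpos hs (by rw [hD0, hκ, zero_sub]), ?_⟩
  simpa only [neg_zero] using hleft.isDecayProfile hp hκpos (by simpa only [neg_zero] using hs)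
    (by simp only [neg_zero, hD0, hκ, zero_sub])

theorem IsBoundState.mass_eq (h : IsBoundState p q ω u u') (hu : IsH1 u u') (hu0 : u ≠ 0)
    (hpos : ∀ x, 0 ≤ u x) (hp : 2 ≤ p) (hω : 0 ≤ ω) : mass u = 2 * halfMass p q (u 0) := by
  have hs := h.apply_zero_pos hu hu0 hpos hp hω
  obtain ⟨hright, hleft⟩ := h.isDecayProfile hu hu0 hpos hp hω
  have hcont := continuous_decayRate hp (u 0 ^ (q - 2) / 2) (u 0)
  have hrate (y : ℝ) (hy : y ∈ Icc 0 (u 0)) : 0 < decayRate p (u 0 ^ (q - 2) / 2) (u 0) y :=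
    decayRate_pos hp (by positivity) hy
  exact mass_eq_two_mul_of_integral_eq hu.integrable_sq (hright.integral_sq_eq hcont hrate)
    (hleft.integral_sq_eq hcont hrate)

theorem IsBoundState.eq_of_apply_zero_eq {ω' : ℝ} (h : IsBoundState p q ω u u') (hu : IsH1 u u')
    (hu0 : u ≠ 0) (hupos : ∀ x, 0 ≤ u x) (hω : 0 ≤ ω) (h' : IsBoundState p q ω' v v')
    (hv : IsH1 v v') (hv0 : v ≠ 0) (hvpos : ∀ x, 0 ≤ v x) (hω' : 0 ≤ ω') (hp : 2 ≤ p)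
    (heq : u 0 = v 0) : u = v := by
  have hs := h.apply_zero_pos hu hu0 hupos hp hω
  obtain ⟨huR, huL⟩ := h.isDecayProfile hu hu0 hupos hp hω
  obtain ⟨hvR, hvL⟩ := h'.isDecayProfile hv hv0 hvpos hp hω'
  rw [← heq] at hvR hvL
  have hsmooth (y : ℝ) (hy : y ∈ Ioc 0 (u 0)) :
      ContDiffAt ℝ 1 (decayRate p (u 0 ^ (q - 2) / 2) (u 0)) y :=
    contDiffAt_decayRate hp (by positivity) hy
  funext x
  rcases le_total 0 x with hx | hx
  · exact huR.eqOn hvR hsmooth hx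
  · simpa using huL.eqOn hvL hsmooth (neg_nonneg.2 hx)

end GroundStates

theorem stmt8_general {p q μ : ℝ} (hp : 2 ≤ p) (hp' : p ≤ 6) (hq : 1 ≤ q) (hq' : q < 4)
    {u u' v v' : ℝ → ℝ} (hupos : ∀ x, 0 ≤ u x) (hvpos : ∀ x, 0 ≤ v x)
    (hu : IsGroundState p q μ u u') (hv : IsGroundState p q μ v v') : u = v := by
  have hmass : mass u = mass v := hu.2.1.trans hv.2.1.symm
  by_cases hu0 : u = 0
  · rw [hu0, hv.1.eq_zero_of_mass_eq_zero (by rw [← hmass, hu0, mass_zero])]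
  have hv0 : v ≠ 0 := fun hv0 => hu0 (hu.1.eq_zero_of_mass_eq_zero (by rw [hmass, hv0, mass_zero]))
  have hωu := frequency_nonneg (p := p) (by linarith) u u'
  have hωv := frequency_nonneg (p := p) (by linarith) v v'
  have hbu := hu.isBoundState hp hq hu0 hupos
  have hbv := hv.isBoundState hp hq hv0 hvpos
  have hhalf : halfMass p q (u 0) = halfMass p q (v 0) := by
    linarith [hbu.mass_eq hu.1 hu0 hupos hp hωu, hbv.mass_eq hv.1 hv0 hvpos hp hωv]
  exact hbu.eq_of_apply_zero_eq hu.1 hu0 hupos hωu hbv hv.1 hv0 hvpos hωv hp <|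
    (halfMass_strictMonoOn hp hp' hq').injOn (hbu.apply_zero_pos hu.1 hu0 hupos hp hωu)
      (hbv.apply_zero_pos hv.1 hv0 hvpos hp hωv) hhalf

theorem stmt8 (p q μ : ℝ) (hp : 2 < p) (hp' : p < 6) (hq : 2 < q) (hq' : q < 4)
    (hμ : 0 < μ) (u u' v v' : ℝ → ℝ)
    (hu : IsH1 u u') (hupos : ∀ x, 0 ≤ u x) (humass : mass u = μ)
    (hugs : ∀ w w' : ℝ → ℝ, IsH1 w w' → mass w = μ → Ffun p q u u' ≤ Ffun p q w w')
    (hv : IsH1 v v') (hvpos : ∀ x, 0 ≤ v x) (hvmass : mass v = μ)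
    (hvgs : ∀ w w' : ℝ → ℝ, IsH1 w w' → mass w = μ → Ffun p q v v' ≤ Ffun p q w w') :
    u = v :=
  stmt8_general hp.le hp'.le (by linarith) hq' hupos hvpos ⟨hu, humass, hugs⟩ ⟨hv, hvmass, hvgs⟩
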